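/- arXiv:2310.11006 — 7 statements merged into one kernel-verified Lean document; each statement's English description precedes it below -/
import Mathlib

section
/- In every MV-algebra A, for all x,y ∈ A the identities x⊖x = 0, x⊕¬x = 1, and (x⊖y)⊕((x⊕¬y)⊙y) = x hold. Consequently the binary terms t₁(x,y):=x⊖y, t₂(x,y):=x⊕¬y together with the ternary term t(x,y,z):=x⊕(y⊙z) satisfy t₁(x,x)=0, t₂(x,x)=1 and t(t₁(x,y),t₂(x,y),y)=x, i.e. they are protomodularity terms for the variety of MV-algebras. -/
namespace MVPaper

/-- An MV-algebra: a set with a binary `⊕`, a unary `¬`, and a constant `0`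
satisfying the MV-algebra axioms. -/
class MV (α : Type*) where
  oplus : α → α → α
  neg : α → α
  zero : α
  oplus_assoc : ∀ x y z : α, oplus x (oplus y z) = oplus (oplus x y) z
  oplus_comm : ∀ x y : α, oplus x y = oplus y x
  oplus_zero : ∀ x : α, oplus x zero = x
  neg_neg : ∀ x : α, neg (neg x) = x
  oplus_neg_zero : ∀ x : α, oplus x (neg zero) = neg zero
  lukasiewicz : ∀ x y : α,
    oplus (neg (oplus (neg x) y)) y = oplus (neg (oplus (neg y) x)) x

namespace MV

variable {α : Type*} [MV α]

/-- `1 := ¬0`. -/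
def one : α := neg zero

/-- `x ⊙ y := ¬(¬x ⊕ ¬y)`. -/
def odot (x y : α) : α := neg (oplus (neg x) (neg y))

/-- `x ⊖ y := ¬(¬x ⊕ y)`. -/
def ominus (x y : α) : α := neg (oplus (neg x) y)

/-- `d(x,y) := (x ⊖ y) ⊕ (y ⊖ x)`. -/
def dist (x y : α) : α := oplus (ominus x y) (ominus y x)

/-- The natural order: `x ≤ y` iff `¬x ⊕ y = 1`. -/
def le (x y : α) : Prop := oplus (neg x) y = one

/-- `x ∨ y := (x ⊖ y) ⊕ y`. -/
def sup (x y : α) : α := oplus (ominus x y) y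

/-- `x ∧ y := x ⊙ (¬x ⊕ y)`. -/
def inf (x y : α) : α := odot x (oplus (neg x) y)

/-- `n · a`, the `n`-fold sum `a ⊕ ⋯ ⊕ a`. -/
def nsmul : ℕ → α → α
  | 0, _ => zero
  | n + 1, a => oplus a (nsmul n a)

end MV

/-- Products of MV-algebras, with componentwise operations. -/
instance prodMV {α β : Type*} [MV α] [MV β] : MV (α × β) where
  oplus x y := (MV.oplus x.1 y.1, MV.oplus x.2 y.2)
  neg x := (MV.neg x.1, MV.neg x.2)
  zero := (MV.zero, MV.zero)
  oplus_assoc x y z :=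
    congrArg₂ Prod.mk (MV.oplus_assoc _ _ _) (MV.oplus_assoc _ _ _)
  oplus_comm x y :=
    congrArg₂ Prod.mk (MV.oplus_comm _ _) (MV.oplus_comm _ _)
  oplus_zero x := by
    obtain ⟨a, b⟩ := x
    exact congrArg₂ Prod.mk (MV.oplus_zero a) (MV.oplus_zero b)
  neg_neg x := by
    obtain ⟨a, b⟩ := x
    exact congrArg₂ Prod.mk (MV.neg_neg a) (MV.neg_neg b)
  oplus_neg_zero x :=
    congrArg₂ Prod.mk (MV.oplus_neg_zero _) (MV.oplus_neg_zero _)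
  lukasiewicz x y :=
    congrArg₂ Prod.mk (MV.lukasiewicz _ _) (MV.lukasiewicz _ _)

/-- A homomorphism of MV-algebras: a map preserving `⊕`, `¬` and `0`. -/
structure IsHom {α β : Type*} [MV α] [MV β] (f : α → β) : Prop where
  map_zero : f MV.zero = MV.zero
  map_oplus : ∀ x y : α, f (MV.oplus x y) = MV.oplus (f x) (f y)
  map_neg : ∀ x : α, f (MV.neg x) = MV.neg (f x)

/-- An ideal of an MV-algebra: contains `0`, closed under `⊕`, downward closed. -/
structure IsIdeal {α : Type*} [MV α] (I : Set α) : Prop where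
  zero_mem : MV.zero ∈ I
  oplus_mem : ∀ ⦃x⦄, x ∈ I → ∀ ⦃y⦄, y ∈ I → MV.oplus x y ∈ I
  lower_mem : ∀ ⦃x⦄, x ∈ I → ∀ ⦃y⦄, MV.le y x → y ∈ I

/-- The kernel of a homomorphism. -/
def ker {α β : Type*} [MV α] [MV β] (f : α → β) : Set α := {x | f x = MV.zero}

/-- The radical of an MV-algebra: `Rad(A) = {a | n·a ≤ ¬a for all n}`
(the intersection of all maximal proper ideals). -/
def Rad (α : Type*) [MV α] : Set α :=
  {a | ∀ n : ℕ, MV.le (MV.nsmul n a) (MV.neg a)}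

/-- `P(A) := Rad(A) ∪ ¬Rad(A)`. -/
def PSet (α : Type*) [MV α] : Set α :=
  Rad α ∪ {x | MV.neg x ∈ Rad α}

/-- An MV-algebra is trivial if `0 = 1`. -/
def IsTrivial (α : Type*) [MV α] : Prop := (MV.zero : α) = MV.one

/-- An MV-algebra is semisimple if its radical is trivial. -/
def Semisimple (α : Type*) [MV α] : Prop := Rad α = ({MV.zero} : Set α)

/-- An MV-algebra is perfect if `A = Rad(A) ∪ ¬Rad(A)`. -/
def Perfect (α : Type*) [MV α] : Prop := ∀ a : α, a ∈ PSet α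

/-- `q : α → Q` realizes `Q` as the quotient of `α` by the ideal `I`,
i.e. by the congruence `x ∼ y ↔ d(x,y) ∈ I`. -/
structure IsQuotientBy {α Q : Type*} [MV α] [MV Q] (I : Set α) (q : α → Q) : Prop where
  hom : IsHom q
  surj : Function.Surjective q
  eq_iff : ∀ x y : α, q x = q y ↔ MV.dist x y ∈ I

/-- `t₁(x,y) := x ⊖ y`. -/
def t1 {α : Type*} [MV α] (x y : α) : α := MV.ominus x y

/-- `t₂(x,y) := x ⊕ ¬y`. -/
def t2 {α : Type*} [MV α] (x y : α) : α := MV.oplus x (MV.neg y)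

/-- `t(x,y,z) := x ⊕ (y ⊙ z)`. -/
def t {α : Type*} [MV α] (x y z : α) : α := MV.oplus x (MV.odot y z)

namespace MV

variable {α : Type*} [MV α]

theorem neg_one : neg (one : α) = zero := neg_neg _

theorem zero_oplus (x : α) : oplus zero x = x := by
  rw [oplus_comm, oplus_zero]

theorem oplus_one (x : α) : oplus x one = one := oplus_neg_zero x

theorem one_oplus (x : α) : oplus one x = one := by
  rw [oplus_comm, oplus_one]

theorem neg_oplus_self (x : α) : oplus (neg x) x = one := by
  have h := lukasiewicz x one
  rwa [oplus_one, neg_one, zero_oplus, eq_comm] at h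

theorem oplus_neg_self (x : α) : oplus x (neg x) = one := by
  rw [oplus_comm, neg_oplus_self]

theorem ominus_self (x : α) : ominus x x = zero := by
  rw [ominus, neg_oplus_self, neg_one]

/-- The meet `y ∧ x`, written as `(x ⊕ ¬y) ⊙ y`, equals `x ⊖ (x ⊖ y)`. -/
theorem odot_oplus_neg (x y : α) :
    odot (oplus x (neg y)) y = ominus x (ominus x y) := by
  have h := lukasiewicz (neg x) (neg y)
  rw [neg_neg, neg_neg, oplus_comm y] at h
  rw [odot, h, ominus, ominus, oplus_comm (neg x) (neg _)]

/-- `x ⊖ y ≤ x`. -/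
theorem ominus_le (x y : α) : le (ominus x y) x := by
  rw [le, ominus, neg_neg, oplus_comm, oplus_assoc, oplus_neg_self, one_oplus]

theorem ominus_oplus_cancel {x y : α} (h : le y x) : oplus (ominus x y) y = x := by
  rw [le] at h
  rw [ominus, lukasiewicz, h, neg_one, zero_oplus]

theorem ominus_oplus_odot (x y : α) :
    oplus (ominus x y) (odot (oplus x (neg y)) y) = x := by
  rw [odot_oplus_neg, oplus_comm, ominus_oplus_cancel (ominus_le x y)]

end MV

/-- In every MV-algebra the identities `x ⊖ x = 0`, `x ⊕ ¬x = 1` and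
`(x ⊖ y) ⊕ ((x ⊕ ¬y) ⊙ y) = x` hold; hence `t₁, t₂, t` are protomodularity
terms for the variety of MV-algebras. -/
theorem protomodularity_terms {α : Type*} [MV α] (x y : α) :
    MV.ominus x x = MV.zero ∧
    MV.oplus x (MV.neg x) = MV.one ∧
    MV.oplus (MV.ominus x y) (MV.odot (MV.oplus x (MV.neg y)) y) = x ∧
    t1 x x = MV.zero ∧ t2 x x = MV.one ∧ t (t1 x y) (t2 x y) y = x := by
  exact ⟨MV.ominus_self x, MV.oplus_neg_self x, MV.ominus_oplus_odot x y,
    MV.ominus_self x, MV.oplus_neg_self x, MV.ominus_oplus_odot x y⟩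

end MVPaper
end

section
/- Let A be a perfect MV-algebra, B a semisimple MV-algebra with B nontrivial, and f: A → B a homomorphism. Then for every a ∈ A: if a ∈ Rad(A) then f(a)=0, and if a ∈ ¬Rad(A) then f(a)=1. In particular f factors through the two-element Boolean subalgebra {0,1} of B. -/
namespace MVPaper

namespace IsHom

variable {α β : Type*} [MV α] [MV β] {f : α → β}

theorem map_one (hf : IsHom f) : f MV.one = MV.one := by
  unfold MV.one
  rw [hf.map_neg, hf.map_zero]

theorem map_nsmul (hf : IsHom f) (n : ℕ) (a : α) :
    f (MV.nsmul n a) = MV.nsmul n (f a) := by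
  induction n with
  | zero => exact hf.map_zero
  | succ n ih => simp only [MV.nsmul, hf.map_oplus, ih]

theorem map_le (hf : IsHom f) {x y : α} (h : MV.le x y) : MV.le (f x) (f y) := by
  unfold MV.le at h ⊢
  rw [← hf.map_neg, ← hf.map_oplus, h, hf.map_one]

theorem map_mem_rad (hf : IsHom f) {a : α} (ha : a ∈ Rad α) : f a ∈ Rad β := fun n => by
  rw [← hf.map_nsmul, ← hf.map_neg]
  exact hf.map_le (ha n)

theorem map_eq_zero_of_mem_rad (hf : IsHom f) (hB : Semisimple β) {a : α} (ha : a ∈ Rad α) :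
    f a = MV.zero := by
  have h := hf.map_mem_rad ha
  rwa [hB] at h

theorem map_eq_one_of_neg_mem_rad (hf : IsHom f) (hB : Semisimple β) {a : α}
    (ha : MV.neg a ∈ Rad α) : f a = MV.one := by
  rw [← MV.neg_neg a, hf.map_neg, hf.map_eq_zero_of_mem_rad hB ha, MV.one]

end IsHom

/-- Any homomorphism from a perfect MV-algebra to a nontrivial semisimple
MV-algebra sends the radical to `0` and the coradical to `1`; in particular it
factors through the two-element Boolean subalgebra `{0,1}`. -/
theorem perfect_to_semisimple_trivial {α β : Type*} [MV α] [MV β]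
    (hA : Perfect α) (hB : Semisimple β) (hBnt : ¬ IsTrivial β)
    {f : α → β} (hf : IsHom f) :
    (∀ a : α, a ∈ Rad α → f a = MV.zero) ∧
    (∀ a : α, MV.neg a ∈ Rad α → f a = MV.one) ∧
    (∀ a : α, f a = MV.zero ∨ f a = MV.one) := by
  exact ⟨fun _ => hf.map_eq_zero_of_mem_rad hB, fun _ => hf.map_eq_one_of_neg_mem_rad hB,
    fun a => (hA a).imp (hf.map_eq_zero_of_mem_rad hB) (hf.map_eq_one_of_neg_mem_rad hB)⟩

end MVPaper
end

section
/- Let B and C be MV-algebras with C nontrivial, and let θ: B → C be a homomorphism such that θ(b) ∈ {0,1} for every b ∈ P(B). Then θ(b)=0 for every b ∈ Rad(B); consequently there exists a unique homomorphism θ': S(B) → C with θ'∘η_B = θ. (This is the precokernel property of η_B: B → S(B) with respect to the inclusion P(B) ↪ B.) -/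
namespace MVPaper

namespace MV

variable {α : Type*} [MV α]

theorem eq_zero_of_oplus_eq_zero {x y : α} (h : oplus x y = zero) : x = zero := by
  have h₁ : oplus (neg x) (oplus x y) = neg zero := by
    rw [oplus_assoc, neg_oplus_self, oplus_comm, one, oplus_neg_zero]
  rw [h, oplus_zero] at h₁
  rw [← neg_neg x, h₁, neg_neg]

theorem eq_of_dist_eq_zero {x y : α} (h : dist x y = zero) : x = y := by
  have hxy : ominus x y = zero := eq_zero_of_oplus_eq_zero h
  have hyx : ominus y x = zero :=
    eq_zero_of_oplus_eq_zero ((oplus_comm _ _).trans h)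
  have hl : oplus (ominus x y) y = oplus (ominus y x) x := lukasiewicz x y
  rw [hxy, hyx, zero_oplus, zero_oplus] at hl
  exact hl.symm

end MV

theorem IsHom.map_dist {α β : Type*} [MV α] [MV β] {f : α → β} (hf : IsHom f) (x y : α) :
    f (MV.dist x y) = MV.dist (f x) (f y) := by
  simp only [MV.dist, MV.ominus, hf.map_oplus, hf.map_neg]

theorem neg_oplus_neg_of_mem_Rad {α : Type*} [MV α] {a : α} (ha : a ∈ Rad α) :
    MV.oplus (MV.neg a) (MV.neg a) = MV.one := by
  have h : MV.oplus (MV.neg (MV.oplus a MV.zero)) (MV.neg a) = MV.one := ha 1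
  rwa [MV.oplus_zero] at h

/-- A homomorphism whose fibres contain those of a surjective homomorphism `q` factors
uniquely through `q`. -/
theorem IsHom.existsUnique_factor {α β Q : Type*} [MV α] [MV β] [MV Q] {f : α → β} {q : α → Q}
    (hf : IsHom f) (hq : IsHom q) (hsurj : Function.Surjective q)
    (h : ∀ x y, q x = q y → f x = f y) :
    ∃! g : Q → β, IsHom g ∧ g ∘ q = f := by
  obtain ⟨g, hg⟩ : ∃ g : Q → β, ∀ x, g (q x) = f x :=
    ⟨fun z => f (Function.surjInv hsurj z), fun x => h _ _ (Function.surjInv_eq hsurj (q x))⟩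
  refine ⟨g, ⟨⟨?_, ?_, ?_⟩, funext hg⟩, ?_⟩
  · rw [← hq.map_zero, hg, hf.map_zero]
  · intro x y
    obtain ⟨x, rfl⟩ := hsurj x
    obtain ⟨y, rfl⟩ := hsurj y
    rw [← hq.map_oplus, hg, hg, hg, hf.map_oplus]
  · intro x
    obtain ⟨x, rfl⟩ := hsurj x
    rw [← hq.map_neg, hg, hg, hf.map_neg]
  · rintro g' ⟨-, hg'⟩
    exact hsurj.injective_comp_right (hg'.trans (funext hg).symm)

/-- Precokernel property of `η_B : B → S(B)` with respect to the inclusion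
`P(B) ↪ B`: if `C` is nontrivial and `θ : B → C` is a homomorphism with
`θ(b) ∈ {0,1}` for every `b ∈ P(B)`, then `θ` vanishes on `Rad(B)` and
factors uniquely as `θ' ∘ η_B = θ` with `θ' : S(B) → C` a homomorphism. -/
theorem precokernel_property {β γ SB : Type*} [MV β] [MV γ] [MV SB]
    (hCnt : ¬ IsTrivial γ)
    {θ : β → γ} (hθ : IsHom θ)
    (hθP : ∀ b ∈ PSet β, θ b = MV.zero ∨ θ b = MV.one)
    {ηB : β → SB} (hηB : IsQuotientBy (Rad β) ηB) :
    (∀ b ∈ Rad β, θ b = MV.zero) ∧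
    ∃! θ' : SB → γ, IsHom θ' ∧ θ' ∘ ηB = θ := by
  have hRad : ∀ b ∈ Rad β, θ b = MV.zero := by
    intro b hb
    refine (hθP b (Or.inl hb)).resolve_right fun h1 => hCnt ?_
    have h := congrArg θ (neg_oplus_neg_of_mem_Rad hb)
    rw [hθ.map_oplus, hθ.map_neg, h1, MV.one, MV.one, hθ.map_neg, hθ.map_zero, MV.neg_neg,
      MV.oplus_zero] at h
    exact h
  refine ⟨hRad, hθ.existsUnique_factor hηB.hom hηB.surj fun x y hxy => ?_⟩
  apply MV.eq_of_dist_eq_zero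
  rw [← hθ.map_dist]
  exact hRad _ ((hηB.eq_iff x y).1 hxy)

end MVPaper
end

section
/- Let B be a nontrivial MV-algebra, A a semisimple MV-algebra, and φ: A → S(B) a homomorphism. Let A' := {(b,a) ∈ B×A : η_B(b) = φ(a)}, a subalgebra of B×A (the pullback of η_B along φ). Then Rad(A') = {(b,0) : b ∈ Rad(B)}, and the map A'/Rad(A') → A sending the class of (b,a) to a is a well-defined isomorphism of MV-algebras. (Hence the counit of the induced adjunction between the slice categories is an isomorphism, i.e. the reflection of semisimple MV-algebras is admissible for categorical Galois theory.) -/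
namespace MVPaper

theorem MV.zero_oplus_s10 {α : Type*} [MV α] (x : α) : MV.oplus MV.zero x = x := by
  rw [MV.oplus_comm, MV.oplus_zero]

theorem MV.neg_oplus_self_s10 {α : Type*} [MV α] (x : α) :
    MV.oplus (MV.neg x) x = MV.neg MV.zero := by
  have h := MV.lukasiewicz (MV.neg MV.zero) x
  rwa [MV.neg_neg, MV.zero_oplus_s10, MV.oplus_neg_zero] at h

theorem MV.eq_zero_of_oplus_eq_zero_s10 {α : Type*} [MV α] {x y : α}
    (h : MV.oplus x y = MV.zero) : x = MV.zero := by
  have h1 := MV.oplus_assoc (MV.neg x) x y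
  rw [h, MV.neg_oplus_self_s10, MV.oplus_zero, MV.oplus_comm, MV.oplus_neg_zero] at h1
  rw [← MV.neg_neg x, h1, MV.neg_neg]

theorem MV.dist_eq_zero_iff {α : Type*} [MV α] {x y : α} :
    MV.dist x y = MV.zero ↔ x = y := by
  constructor
  · intro h
    have hxy : MV.ominus x y = MV.zero := MV.eq_zero_of_oplus_eq_zero_s10 h
    have hyx : MV.ominus y x = MV.zero :=
      MV.eq_zero_of_oplus_eq_zero_s10 ((MV.oplus_comm _ _).trans h)
    have hl : MV.oplus (MV.ominus x y) y = MV.oplus (MV.ominus y x) x := MV.lukasiewicz x y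
    rw [hxy, hyx, MV.zero_oplus_s10, MV.zero_oplus_s10] at hl
    exact hl.symm
  · rintro rfl
    simp only [MV.dist, MV.ominus, MV.neg_oplus_self_s10, MV.neg_neg, MV.oplus_zero]

theorem MV.dist_zero {α : Type*} [MV α] (x : α) : MV.dist x MV.zero = x := by
  simp only [MV.dist, MV.ominus, MV.oplus_zero, MV.neg_neg]
  rw [MV.oplus_comm (MV.neg MV.zero), MV.oplus_neg_zero, MV.neg_neg, MV.oplus_zero]

theorem MV.nsmul_prod {α β : Type*} [MV α] [MV β] (n : ℕ) (p : α × β) :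
    MV.nsmul n p = (MV.nsmul n p.1, MV.nsmul n p.2) := by
  induction n with
  | zero => rfl
  | succ n ih => simp only [MV.nsmul, ih]; rfl

theorem mem_Rad_prod_iff {α β : Type*} [MV α] [MV β] {p : α × β} :
    p ∈ Rad (α × β) ↔ p.1 ∈ Rad α ∧ p.2 ∈ Rad β := by
  have hle (n : ℕ) : MV.le (MV.nsmul n p) (MV.neg p) ↔
      MV.le (MV.nsmul n p.1) (MV.neg p.1) ∧ MV.le (MV.nsmul n p.2) (MV.neg p.2) := by
    rw [MV.nsmul_prod]
    exact Prod.mk_inj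
  simp only [Rad, Set.mem_ofPred_eq, hle, forall_and]

theorem Semisimple.mem_Rad_iff {α : Type*} [MV α] (h : Semisimple α) {a : α} :
    a ∈ Rad α ↔ a = MV.zero := by
  rw [h, Set.mem_singleton_iff]

/-- Admissibility of the semisimple reflection: let `B` be nontrivial, `A`
semisimple, `φ : A → S(B)` a homomorphism, and let
`A' = {(b,a) ∈ B × A : η_B b = φ a}` be the pullback of `η_B` along `φ`.
Then `Rad(A') = {(b,0) : b ∈ Rad B}`, and the map `A'/Rad(A') → A`,
`[(b,a)] ↦ a`, is a well-defined isomorphism of MV-algebras (stated here as: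
`(b,a) ↦ a` identifies elements of `A'` exactly up to `Rad(A')` and is
surjective onto `A`). -/
theorem semisimple_reflection_admissible {α β SB : Type*} [MV α] [MV β] [MV SB]
    (hBnt : ¬ IsTrivial β) (hA : Semisimple α)
    {ηB : β → SB} (hηB : IsQuotientBy (Rad β) ηB)
    {φ : α → SB} (hφ : IsHom φ) :
    (Rad (β × α) ∩ {p : β × α | ηB p.1 = φ p.2}
        = {p : β × α | p.1 ∈ Rad β ∧ p.2 = MV.zero}) ∧
    (∀ x y : β × α, ηB x.1 = φ x.2 → ηB y.1 = φ y.2 →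
        (x.2 = y.2 ↔ MV.dist x y ∈ Rad (β × α))) ∧
    (∀ a : α, ∃ p : β × α, ηB p.1 = φ p.2 ∧ p.2 = a) := by
  refine ⟨?_, ?_, ?_⟩
  · ext p
    simp only [Set.mem_inter_iff, Set.mem_ofPred_eq, mem_Rad_prod_iff, hA.mem_Rad_iff]
    refine ⟨And.left, fun hp => ⟨hp, ?_⟩⟩
    rw [hp.2, hφ.map_zero, ← hηB.hom.map_zero, hηB.eq_iff, MV.dist_zero]
    exact hp.1
  · intro x y hx hy
    rw [mem_Rad_prod_iff, hA.mem_Rad_iff]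
    refine ⟨fun h => ⟨(hηB.eq_iff _ _).1 (by rw [hx, hy, h]), MV.dist_eq_zero_iff.2 h⟩,
      fun h => MV.dist_eq_zero_iff.1 h.2⟩
  · intro a
    obtain ⟨b, hb⟩ := hηB.surj (φ a)
    exact ⟨(b, a), hb, rfl⟩

end MVPaper
end

section
/- Let f: A → B be a homomorphism of MV-algebras. Since f(Rad(A)) ⊆ Rad(B), f restricts to maps Rad(A) → Rad(B) and P(f): P(A) → P(B). Then the restriction f: Rad(A) → Rad(B) is injective if and only if P(f): P(A) → P(B) is injective, or (Rad(A)={0}, A is nontrivial, and B is trivial) — i.e. P(A) is the initial two-element algebra and P(B) is the terminal trivial algebra. -/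
namespace MVPaper

namespace MV

variable {α : Type*} [MV α]

theorem zero_mem_rad : (zero : α) ∈ Rad α := fun _ => oplus_neg_zero _

theorem eq_of_isTrivial (h : IsTrivial α) (x y : α) : x = y := by
  have eq_one (z : α) : z = one := by
    rw [← oplus_zero z, h]
    exact oplus_neg_zero z
  rw [eq_one x, eq_one y]

theorem neg_eq_one_of_mem_rad {b : α} (hb : b ∈ Rad α) (h : oplus b b = one) :
    neg b = one := by
  have h2 : oplus (neg (oplus b (oplus b zero))) (neg b) = one := hb 2
  rwa [oplus_zero, h, one, neg_neg, zero_oplus] at h2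

theorem oplus_neg_self_eq_one_of_mem_rad {b : α} (hb : b ∈ Rad α) :
    oplus (neg b) (neg b) = one := by
  have h1 : oplus (neg (oplus b zero)) (neg b) = one := hb 1
  rwa [oplus_zero] at h1

/-- In a nontrivial MV-algebra, `Rad` and `¬Rad` are disjoint. -/
theorem isTrivial_of_mem_rad_of_neg_mem_rad {b : α} (hb : b ∈ Rad α)
    (hnb : neg b ∈ Rad α) : IsTrivial α := by
  have hbb := oplus_neg_self_eq_one_of_mem_rad hnb
  rw [neg_neg] at hbb
  have neg_b := neg_eq_one_of_mem_rad hb hbb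
  have b_one := neg_eq_one_of_mem_rad hnb (oplus_neg_self_eq_one_of_mem_rad hb)
  rwa [neg_b, one, neg_neg] at b_one

end MV

namespace IsHom

variable {α β : Type*} [MV α] [MV β] {f : α → β}

theorem mapsTo_rad (hf : IsHom f) : Set.MapsTo f (Rad α) (Rad β) := by
  intro a ha n
  have h := congrArg f (ha n)
  rwa [hf.map_oplus, hf.map_neg, hf.map_neg, hf.map_nsmul, hf.map_one] at h

theorem neg_map_mem_rad (hf : IsHom f) {x : α} (hx : MV.neg x ∈ Rad α) :
    MV.neg (f x) ∈ Rad β :=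
  hf.map_neg x ▸ hf.mapsTo_rad hx

theorem mapsTo_pSet (hf : IsHom f) : Set.MapsTo f (PSet α) (PSet β) := by
  rintro x (hx | hx)
  · exact Or.inl (hf.mapsTo_rad hx)
  · exact Or.inr (hf.neg_map_mem_rad hx)

theorem injOn_pSet (hf : IsHom f) (hβ : ¬ IsTrivial β) (hinj : Set.InjOn f (Rad α)) :
    Set.InjOn f (PSet α) := by
  rintro x (hx | hx) y (hy | hy) hxy
  · exact hinj hx hy hxy
  · exact absurd (MV.isTrivial_of_mem_rad_of_neg_mem_rad (hf.mapsTo_rad hx)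
      (hxy ▸ hf.neg_map_mem_rad hy)) hβ
  · exact absurd (MV.isTrivial_of_mem_rad_of_neg_mem_rad (hf.mapsTo_rad hy)
      (hxy ▸ hf.neg_map_mem_rad hx)) hβ
  · have hneg : MV.neg x = MV.neg y :=
      hinj hx hy (by rw [hf.map_neg, hf.map_neg, hxy])
    rw [← MV.neg_neg x, hneg, MV.neg_neg]

end IsHom

/-- For a homomorphism `f : A → B`, the restriction `f : Rad(A) → Rad(B)` is
injective iff `P(f) : P(A) → P(B)` is injective, or `Rad(A) = {0}`, `A` is
nontrivial and `B` is trivial (i.e. `P(A)` is initial and `P(B)` terminal). -/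
theorem rad_injective_iff {α β : Type*} [MV α] [MV β]
    {f : α → β} (hf : IsHom f) :
    Set.MapsTo f (Rad α) (Rad β) ∧ Set.MapsTo f (PSet α) (PSet β) ∧
    (Set.InjOn f (Rad α) ↔
      (Set.InjOn f (PSet α) ∨
        (Rad α = ({MV.zero} : Set α) ∧ ¬ IsTrivial α ∧ IsTrivial β))) := by
  refine ⟨hf.mapsTo_rad, hf.mapsTo_pSet, fun hinj => ?_, ?_⟩
  · by_cases hβ : IsTrivial β
    · by_cases hα : IsTrivial α
      · exact Or.inl fun x _ y _ _ => MV.eq_of_isTrivial hα x y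
      · refine Or.inr ⟨Set.eq_singleton_iff_unique_mem.2 ⟨MV.zero_mem_rad, ?_⟩, hα, hβ⟩
        exact fun x hx => hinj hx MV.zero_mem_rad (MV.eq_of_isTrivial hβ _ _)
    · exact Or.inl (hf.injOn_pSet hβ hinj)
  · rintro (h | ⟨h, -, -⟩)
    · exact h.mono Set.subset_union_left
    · rw [h]
      exact Set.injOn_singleton f _

end MVPaper
end

section
/- Let f: A → B be a surjective homomorphism of MV-algebras. Let Eq(f) := {(a₁,a₂) ∈ A×A : f(a₁)=f(a₂)} with componentwise operations, and let π₁: Eq(f) → A be the first projection. Then the restriction P(π₁): P(Eq(f)) → P(A) is an isomorphism (i.e. f is a normal extension for the Galois structure of the semisimple reflection) if and only if P(f): P(A) → P(B) is injective, or (Rad(A)={0}, A is nontrivial, and B is trivial). -/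
namespace MVPaper

theorem zero_mem_Rad (α : Type*) [MV α] : (MV.zero : α) ∈ Rad α :=
  fun _ => MV.oplus_neg_zero _

theorem IsTrivial.subsingleton {α : Type*} [MV α] (h : IsTrivial α) : Subsingleton α := by
  have eq_zero (x : α) : x = MV.zero := by
    have hx := MV.oplus_neg_zero x
    rwa [show MV.neg (MV.zero : α) = MV.zero from h.symm, MV.oplus_zero] at hx
  exact ⟨fun x y => (eq_zero x).trans (eq_zero y).symm⟩

/-- Only a trivial MV-algebra has an element `b` with both `b` and `¬b` in the radical. -/
theorem isTrivial_of_mem_Rad_of_neg_mem_Rad {α : Type*} [MV α] {b : α}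
    (hb : b ∈ Rad α) (hb' : MV.neg b ∈ Rad α) : IsTrivial α := by
  have h2 := hb 2
  have h1 := hb' 1
  simp only [MV.le, MV.nsmul, MV.oplus_zero, MV.neg_neg, MV.one] at h1 h2
  rw [h1, MV.neg_neg, MV.oplus_comm, MV.oplus_zero] at h2
  have h0 : b = MV.zero := by rw [← MV.neg_neg b, h2, MV.neg_neg]
  rwa [h0, MV.oplus_zero] at h1

theorem IsHom.map_nsmul_s13 {α β : Type*} [MV α] [MV β] {f : α → β} (hf : IsHom f)
    (n : ℕ) (a : α) : f (MV.nsmul n a) = MV.nsmul n (f a) := by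
  induction n with
  | zero => exact hf.map_zero
  | succ n ih => rw [MV.nsmul, hf.map_oplus, ih, MV.nsmul]

theorem IsHom.map_mem_Rad {α β : Type*} [MV α] [MV β] {f : α → β} (hf : IsHom f)
    {a : α} (ha : a ∈ Rad α) : f a ∈ Rad β := by
  intro n
  have h := congrArg f (ha n)
  rwa [hf.map_oplus, hf.map_neg, hf.map_neg, hf.map_nsmul_s13, MV.one, hf.map_neg,
    hf.map_zero] at h

theorem isHom_fst {α β : Type*} [MV α] [MV β] : IsHom (Prod.fst : α × β → α) :=
  ⟨rfl, fun _ _ => rfl, fun _ => rfl⟩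

theorem isHom_snd {α β : Type*} [MV α] [MV β] : IsHom (Prod.snd : α × β → β) :=
  ⟨rfl, fun _ _ => rfl, fun _ => rfl⟩

theorem mk_mem_Rad_prod {α β : Type*} [MV α] [MV β] {a : α} {b : β} :
    (a, b) ∈ Rad (α × β) ↔ a ∈ Rad α ∧ b ∈ Rad β := by
  refine ⟨fun h => ⟨isHom_fst.map_mem_Rad h, isHom_snd.map_mem_Rad h⟩, fun h n => ?_⟩
  have hn : MV.nsmul n (a, b) = (MV.nsmul n a, MV.nsmul n b) :=
    Prod.ext (isHom_fst.map_nsmul_s13 n (a, b)) (isHom_snd.map_nsmul_s13 n (a, b))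
  rw [hn]
  exact Prod.ext (h.1 n) (h.2 n)

theorem mk_mem_PSet_prod {α β : Type*} [MV α] [MV β] {a : α} {b : β} :
    (a, b) ∈ PSet (α × β) ↔
      (a ∈ Rad α ∧ b ∈ Rad β) ∨ (MV.neg a ∈ Rad α ∧ MV.neg b ∈ Rad β) :=
  or_congr mk_mem_Rad_prod mk_mem_Rad_prod

/-- A surjective homomorphism `f : A → B` is a normal extension for the Galois
structure of the semisimple reflection — i.e. the restriction
`P(π₁) : P(Eq(f)) → P(A)` of the first projection of the kernel pair
`Eq(f) = {(a₁,a₂) : f a₁ = f a₂} ⊆ A × A` is an isomorphism — iff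
`P(f) : P(A) → P(B)` is injective, or `Rad(A) = {0}`, `A` is nontrivial and
`B` is trivial. -/
theorem normal_extension_iff {α β : Type*} [MV α] [MV β]
    {f : α → β} (hf : IsHom f) (hfs : Function.Surjective f) :
    Set.BijOn (Prod.fst : α × α → α)
        (PSet (α × α) ∩ {p : α × α | f p.1 = f p.2}) (PSet α) ↔
    (Set.InjOn f (PSet α) ∨
      (Rad α = ({MV.zero} : Set α) ∧ ¬ IsTrivial α ∧ IsTrivial β)) := by
  constructor
  · intro h
    have eq_of_mem {x y : α} (hxx : (x, x) ∈ PSet (α × α)) (hxy : (x, y) ∈ PSet (α × α))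
        (hfxy : f x = f y) : x = y :=
      congrArg Prod.snd (h.injOn ⟨hxx, rfl⟩ ⟨hxy, hfxy⟩ rfl)
    have eq_of_rad {x y : α} (hx : x ∈ Rad α) (hy : y ∈ Rad α) (hxy : f x = f y) : x = y :=
      eq_of_mem (mk_mem_PSet_prod.2 (.inl ⟨hx, hx⟩)) (mk_mem_PSet_prod.2 (.inl ⟨hx, hy⟩)) hxy
    by_cases hβ : IsTrivial β
    · have := hβ.subsingleton
      by_cases hα : IsTrivial α
      · have := hα.subsingleton
        exact .inl fun x _ y _ _ => Subsingleton.elim x y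
      · refine .inr ⟨Set.eq_singleton_iff_unique_mem.2 ⟨zero_mem_Rad α, fun r hr => ?_⟩, hα, hβ⟩
        exact eq_of_rad hr (zero_mem_Rad α) (Subsingleton.elim _ _)
    · refine .inl ?_
      rintro x (hx | hx) y (hy | hy) hxy
      · exact eq_of_rad hx hy hxy
      · refine absurd (isTrivial_of_mem_Rad_of_neg_mem_Rad (hf.map_mem_Rad hx) ?_) hβ
        rw [hxy, ← hf.map_neg]
        exact hf.map_mem_Rad hy
      · refine absurd (isTrivial_of_mem_Rad_of_neg_mem_Rad (hf.map_mem_Rad hy) ?_) hβ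
        rw [← hxy, ← hf.map_neg]
        exact hf.map_mem_Rad hx
      · exact eq_of_mem (mk_mem_PSet_prod.2 (.inr ⟨hx, hx⟩))
          (mk_mem_PSet_prod.2 (.inr ⟨hx, hy⟩)) hxy
  · intro h
    refine ⟨fun p hp => hp.1.imp isHom_fst.map_mem_Rad isHom_fst.map_mem_Rad, ?_,
      fun x hx => ⟨(x, x), ⟨mk_mem_PSet_prod.2 (hx.imp (fun h => ⟨h, h⟩) fun h => ⟨h, h⟩), rfl⟩,
        rfl⟩⟩
    rintro ⟨x, y⟩ ⟨hy, hxy⟩ ⟨x', y'⟩ ⟨hy', hxy'⟩ (rfl : x = x')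
    rw [mk_mem_PSet_prod] at hy hy'
    refine Prod.ext rfl ?_
    rcases h with hinj | ⟨hrad, hα, -⟩
    · exact hinj (hy.imp And.right And.right) (hy'.imp And.right And.right)
        (hxy.symm.trans hxy')
    · rcases hy with ⟨hx, hy⟩ | ⟨hx, hy⟩ <;> rcases hy' with ⟨hx', hy'⟩ | ⟨hx', hy'⟩
      · rw [hrad] at hy hy'
        exact hy.trans hy'.symm
      · exact absurd (isTrivial_of_mem_Rad_of_neg_mem_Rad hx hx') hα
      · exact absurd (isTrivial_of_mem_Rad_of_neg_mem_Rad hx' hx) hα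
      · rw [hrad] at hy hy'
        simpa only [MV.neg_neg] using congrArg MV.neg (hy.trans hy'.symm)

end MVPaper
end

section
/- Let A be an MV-algebra and x, y, z ∈ A with x ≤ y⊕z. Then there exist y₁, z₁ ∈ A with y₁ ≤ y, z₁ ≤ z, and x = y₁⊕z₁ (Riesz decomposition property for MV-algebras). -/
namespace MVPaper

namespace MV

variable {α : Type*} [MV α]

theorem ominus_le_iff (x y z : α) : le (ominus x y) z ↔ le x (oplus y z) := by
  simp only [le, ominus, neg_neg, oplus_assoc]

theorem inf_comm (x y : α) : inf x y = inf y x := by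
  have h := lukasiewicz (neg x) (neg y)
  rw [neg_neg, neg_neg] at h
  rw [inf, inf, odot, odot, oplus_comm (neg y) (neg (oplus (neg y) x)), oplus_comm (neg y) x, h,
    oplus_comm (neg x) y, oplus_comm (neg x)]

theorem inf_le_left (x y : α) : le (inf x y) x := by
  rw [le, inf, odot, neg_neg, oplus_comm (neg x), ← oplus_assoc, neg_oplus_self, oplus_one]

theorem inf_le_right (x y : α) : le (inf x y) y := by
  rw [inf_comm]
  exact inf_le_left y x

theorem inf_oplus_ominus (x y : α) : oplus (inf x y) (ominus x y) = x := by
  rw [inf, odot, ominus, lukasiewicz, neg_neg, oplus_comm (neg x) y, ← oplus_assoc,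
    neg_oplus_self, oplus_one, neg_one, zero_oplus]

end MV

/-- Riesz decomposition property for MV-algebras: if `x ≤ y ⊕ z` then there
exist `y₁ ≤ y` and `z₁ ≤ z` with `x = y₁ ⊕ z₁`. -/
theorem riesz_decomposition {α : Type*} [MV α] (x y z : α)
    (h : MV.le x (MV.oplus y z)) :
    ∃ y₁ z₁ : α, MV.le y₁ y ∧ MV.le z₁ z ∧ x = MV.oplus y₁ z₁ := by
  exact ⟨MV.inf x y, MV.ominus x y, MV.inf_le_right x y, (MV.ominus_le_iff x y z).2 h,
    (MV.inf_oplus_ominus x y).symm⟩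

end MVPaper
end
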